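/- arXiv:1508.03035 — 11 statements merged into one kernel-verified Lean document; each statement's English description precedes it below -/
import Mathlib

section
/- For all positive integers k and a and all integers n ≥ 1, the Generalized k-Pell and k-Pell sequences satisfy G_{k,n} = a P_{k,n} + a k P_{k,n-1}. -/
/-- The Generalized k-Pell sequence. -/
def genPell (k a : ℕ) : ℕ → ℝ
  | 0 => a
  | 1 => a
  | n + 2 => 2 * genPell k a (n + 1) + k * genPell k a n

/-- The k-Pell sequence. -/
def kPell (k : ℕ) : ℕ → ℝ
  | 0 => 0
  | 1 => 1
  | n + 2 => 2 * kPell k (n + 1) + k * kPell k n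

/-- G_{k,n} = a P_{k,n} + a k P_{k,n-1} for n ≥ 1. -/
theorem genPell_eq_kPell_comb (k a : ℕ) (hk : 0 < k) (ha : 0 < a) (n : ℕ) (hn : 1 ≤ n) :
    genPell k a n = (a : ℝ) * kPell k n + (a : ℝ) * (k : ℝ) * kPell k (n - 1) := by
  -- Both sides satisfy the same second-order recurrence, so it suffices to compare n = 1, 2.
  clear hk ha
  induction n using Nat.twoStepInduction with
  | zero => omega
  | one => simp [genPell, kPell]
  | more n ih₀ ih₁ =>
    -- The recurrence for `n + 2` uses the claim at `n`, which is only available for `n ≥ 1`.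
    rcases n with _ | m
    · simp [genPell, kPell]
      ring
    · have h₀ := ih₀ (by omega)
      have h₁ := ih₁ (by omega)
      simp only [Nat.add_one_sub_one] at h₀ h₁
      change 2 * genPell k a (m + 2) + k * genPell k a (m + 1) =
        (a : ℝ) * (2 * kPell k (m + 2) + k * kPell k (m + 1)) +
          (a : ℝ) * (k : ℝ) * (2 * kPell k (m + 1) + k * kPell k m)
      linear_combination 2 * h₁ + (k : ℝ) * h₀
end

section
/- Catalan's identity for the Generalized k-Pell sequence: for all positive integers k and a, every positive integer r, and every natural number n with n ≥ r, G_{k,n-r} G_{k,n+r} - G_{k,n}^2 = (-k)^{n-r} (G_{k,r}^2 - a^2 (-k)^r). -/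
/-- Binet form, for any `x`, `y` with `x + y = 2` and `x y = -k`. -/
theorem genPell_binet (k a : ℕ) (x y : ℝ) (hs : x + y = 2) (hp : x * y = -(k : ℝ)) :
    ∀ n, genPell k a n = a / 2 * (x ^ n + y ^ n)
  | 0 => by simp only [genPell, pow_zero]; ring
  | 1 => by simp only [genPell, pow_one, hs]; ring
  | n + 2 => by
    have hk : (k : ℝ) = -(x * y) := by rw [hp, neg_neg]
    simp only [genPell, genPell_binet k a x y hs hp (n + 1), genPell_binet k a x y hs hp n]
    rw [hk, ← hs]
    ring

/-- Catalan's identity for the Generalized k-Pell sequence. -/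
theorem genPell_catalan (k a : ℕ) (hk : 0 < k) (ha : 0 < a) (r : ℕ) (hr : 0 < r)
    (n : ℕ) (hn : r ≤ n) :
    genPell k a (n - r) * genPell k a (n + r) - (genPell k a n) ^ 2 =
      (-(k : ℝ)) ^ (n - r) * ((genPell k a r) ^ 2 - (a : ℝ) ^ 2 * (-(k : ℝ)) ^ r) := by
  obtain ⟨m, rfl⟩ := Nat.exists_eq_add_of_le' hn
  have hsq : √(1 + (k : ℝ)) ^ 2 = 1 + k := Real.sq_sqrt (by positivity)
  obtain ⟨x, y, hs, hp⟩ : ∃ x y : ℝ, x + y = 2 ∧ x * y = -(k : ℝ) :=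
    ⟨1 + √(1 + (k : ℝ)), 1 - √(1 + (k : ℝ)), by ring, by linear_combination -hsq⟩
  simp only [Nat.add_sub_cancel, genPell_binet k a x y hs hp, ← hp]
  ring
end

section
/- Cassini's identity for the Generalized k-Pell sequence: for all positive integers k and a and all integers n ≥ 1, G_{k,n-1} G_{k,n+1} - G_{k,n}^2 = a^2 (-k)^{n-1} (1+k). -/
/-- Cassini's identity for the Generalized k-Pell sequence. -/
theorem genPell_cassini (k a : ℕ) (hk : 0 < k) (ha : 0 < a) (n : ℕ) (hn : 1 ≤ n) :
    genPell k a (n - 1) * genPell k a (n + 1) - (genPell k a n) ^ 2 =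
      (a : ℝ) ^ 2 * (-(k : ℝ)) ^ (n - 1) * (1 + (k : ℝ)) := by
  obtain ⟨m, rfl⟩ := Nat.exists_eq_add_of_le' hn
  simp only [Nat.add_sub_cancel]
  induction m with
  | zero =>
    simp only [genPell]
    ring
  | succ m ih =>
    have ih := ih (Nat.le_add_left 1 m)
    have h₁ : genPell k a (m + 1 + 1) = 2 * genPell k a (m + 1) + k * genPell k a m := rfl
    have h₂ : genPell k a (m + 1 + 1 + 1) =
        2 * genPell k a (m + 1 + 1) + k * genPell k a (m + 1) := rfl
    -- One step of the recurrence multiplies the Cassini expression by `-k`.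
    rw [h₂, pow_succ]
    rw [h₁] at ih ⊢
    linear_combination (-(k : ℝ)) * ih
end

section
/- For all positive integers k, a, and n, the determinant of the n×n matrix G_n(k) equals G_{k,n+1}, the (n+1)-st term of the Generalized k-Pell sequence. -/
/-- The n×n tridiagonal generating matrix G_n(k) for the Generalized k-Pell sequence:
    (1,1) entry ak+2a, (1,2) entry ak, remaining diagonal entries 2, remaining
    superdiagonal entries k, subdiagonal entries -1, all other entries 0. -/
def genPellMatrix (k a n : ℕ) : Matrix (Fin n) (Fin n) ℝ :=
  Matrix.of fun i j =>
    if (i : ℕ) = 0 ∧ (j : ℕ) = 0 then (a : ℝ) * k + 2 * a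
    else if (i : ℕ) = 0 ∧ (j : ℕ) = 1 then (a : ℝ) * k
    else if (i : ℕ) = (j : ℕ) then 2
    else if (j : ℕ) = (i : ℕ) + 1 then (k : ℝ)
    else if (i : ℕ) = (j : ℕ) + 1 then -1
    else 0

/-- The three-term recurrence for the leading principal minors of a tridiagonal array: expand along
the last row, then expand the one remaining cofactor along its last column. -/
theorem det_tridiagonal_succ_succ {R : Type*} [CommRing R] (f : ℕ → ℕ → R)
    (hup : ∀ i j, i + 1 < j → f i j = 0) (hlow : ∀ i j, j + 1 < i → f i j = 0) (n : ℕ) :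
    (Matrix.of fun i j : Fin (n + 2) => f i j).det =
      f (n + 1) (n + 1) * (Matrix.of fun i j : Fin (n + 1) => f i j).det -
        f n (n + 1) * f (n + 1) n * (Matrix.of fun i j : Fin n => f i j).det := by
  -- The minor deleting the last row and the penultimate column.
  have hminor : ((Matrix.of fun i j : Fin (n + 2) => f i j).submatrix
      (Fin.last (n + 1)).succAbove (Fin.last n).castSucc.succAbove).det =
        f n (n + 1) * (Matrix.of fun i j : Fin n => f i j).det := by
    rw [Matrix.det_succ_column _ (Fin.last n), Fin.sum_univ_castSucc, Finset.sum_eq_zero]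
    · have hsub : ((Matrix.of fun i j : Fin (n + 2) => f i j).submatrix
          (Fin.last (n + 1)).succAbove (Fin.last n).castSucc.succAbove).submatrix
            (Fin.last n).succAbove (Fin.last n).succAbove =
          Matrix.of fun i j : Fin n => f i j := by
        ext i j
        have hj : (Fin.last n).castSucc.succAbove j.castSucc = j.castSucc.castSucc :=
          Fin.succAbove_of_castSucc_lt _ _ (by simp [Fin.lt_def])
        simp [hj]
      rw [hsub]
      have hl : (Fin.last n).castSucc.succAbove (Fin.last n) = Fin.last (n + 1) := by
        rw [Fin.succAbove_of_le_castSucc _ _ le_rfl, Fin.succ_last]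
      simp [hl, ← two_mul, pow_mul]
    · intro i _
      have hl : (Fin.last n).castSucc.succAbove (Fin.last n) = Fin.last (n + 1) := by
        rw [Fin.succAbove_of_le_castSucc _ _ le_rfl, Fin.succ_last]
      simp [hl, hup i (n + 1) (by omega)]
  have hmain : (Matrix.of fun i j : Fin (n + 2) => f i j).submatrix
      (Fin.last (n + 1)).succAbove (Fin.last (n + 1)).succAbove =
        Matrix.of fun i j : Fin (n + 1) => f i j := by
    ext i j
    simp
  rw [Matrix.det_succ_row _ (Fin.last (n + 1)), Fin.sum_univ_castSucc, Fin.sum_univ_castSucc,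
    Finset.sum_eq_zero, hminor, hmain]
  · have h1 : (-1 : R) ^ (n + 1 + n) = -1 := Odd.neg_one_pow ⟨n, by ring⟩
    have h2 : (-1 : R) ^ (n + 1 + (n + 1)) = 1 := Even.neg_one_pow ⟨n + 1, rfl⟩
    simp only [Fin.val_last, Fin.val_castSucc, Matrix.of_apply, h1, h2]
    ring
  · intro i _
    simp [hlow (n + 1) i (by omega)]

/-- From size three on, the minors obey the recurrence of the sequence: the first row, which carries
the exceptional entries, no longer meets the last two diagonal positions. -/
theorem det_genPellMatrix_succ_succ (k a n : ℕ) :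
    (genPellMatrix k a (n + 3)).det =
      2 * (genPellMatrix k a (n + 2)).det + k * (genPellMatrix k a (n + 1)).det := by
  have h := det_tridiagonal_succ_succ (fun i j : ℕ =>
    if i = 0 ∧ j = 0 then (a : ℝ) * k + 2 * a
    else if i = 0 ∧ j = 1 then (a : ℝ) * k
    else if i = j then 2
    else if j = i + 1 then (k : ℝ)
    else if i = j + 1 then -1
    else 0)
    (fun i j hij => by
      simp only [show ¬(i = 0 ∧ j = 0) by omega, show ¬(i = 0 ∧ j = 1) by omega,
        show ¬(i = j) by omega, show ¬(j = i + 1) by omega, show ¬(i = j + 1) by omega, if_false])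
    (fun i j hij => by
      simp only [show ¬(i = 0 ∧ j = 0) by omega, show ¬(i = 0 ∧ j = 1) by omega,
        show ¬(i = j) by omega, show ¬(j = i + 1) by omega, show ¬(i = j + 1) by omega, if_false])
    (n + 1)
  unfold genPellMatrix
  rw [h]
  simp

/-- The `(n+1)`-st minor is the `(n+2)`-nd term; the shift makes the size positive. -/
theorem det_genPellMatrix_succ (k a : ℕ) :
    ∀ n : ℕ, (genPellMatrix k a (n + 1)).det = genPell k a (n + 2)
  | 0 => by
    simp [genPellMatrix, genPell]
    ring
  | 1 => by
    simp [genPellMatrix, genPell, Matrix.det_fin_two]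
    ring
  | n + 2 => by
    rw [det_genPellMatrix_succ_succ, det_genPellMatrix_succ k a (n + 1),
      det_genPellMatrix_succ k a n]
    rfl

/-- The determinant of G_n(k) is the (n+1)-st Generalized k-Pell number. -/
theorem det_genPellMatrix (k a n : ℕ) (hk : 0 < k) (ha : 0 < a) (hn : 0 < n) :
    (genPellMatrix k a n).det = genPell k a (n + 1) := by
  obtain ⟨m, rfl⟩ := Nat.exists_eq_succ_of_ne_zero hn.ne'
  exact det_genPellMatrix_succ k a m
end

section
/- For all positive integers k, a, and m, the even-index closed form holds: G_{k,2m+1} = Σ_{i=1}^{m} Σ_{j=0}^{1} C(m-2+i+j, m-i) · a^{1-j} · k^{m+1-i-j} · 2^{2i+j-2} · (ak+2a)^j, where C(t,b) denotes the binomial coefficient with the convention C(t,b) = 0 whenever t < b (in particular C(-1,0) = 0). -/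
/-- Binomial coefficient with integer top, with the convention that
    C(t,b) = 0 whenever t < b (in particular C(-1,0) = 0). -/
def binom (t : ℤ) (b : ℕ) : ℤ :=
  if t < (b : ℤ) then 0 else (t.toNat).choose b

/-- The binomial sum for `U (2p+1)`, where `U 0 = 0`, `U 1 = 1`, `U (n+2) = 2 U (n+1) + k U n`. -/
def oddU (k : ℝ) (p : ℕ) : ℝ :=
  ∑ i ∈ Finset.range (p + 1), ((p + i).choose (p - i) : ℝ) * 4 ^ i * k ^ (p - i)

/-- The binomial sum for `U (2p+2)`, with `U` as in `oddU`. -/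
def evenU (k : ℝ) (p : ℕ) : ℝ :=
  ∑ i ∈ Finset.range (p + 1), ((p + 1 + i).choose (p - i) : ℝ) * (2 * 4 ^ i) * k ^ (p - i)

lemma oddU_succ (k : ℝ) (p : ℕ) : oddU k (p + 1) = 2 * evenU k p + k * oddU k p := by
  -- Pascal's rule on the terms `i ≤ p`; the top term `i = p + 1` joins the second part.
  have h1 : oddU k (p + 1) = k * oddU k p +
      ∑ i ∈ Finset.range (p + 2), ((p + i).choose (p + 1 - i) : ℝ) * 4 ^ i * k ^ (p + 1 - i) := by
    unfold oddU
    rw [Finset.sum_range_succ, Finset.sum_range_succ _ (p + 1), Finset.mul_sum,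
      ← add_assoc (Finset.sum _ _),
      ← Finset.sum_add_distrib]
    congr 1
    · refine Finset.sum_congr rfl fun i hi => ?_
      have hi' : i ≤ p := Nat.lt_succ_iff.mp (Finset.mem_range.mp hi)
      rw [show p + 1 - i = p - i + 1 by omega, show p + 1 + i = p + i + 1 by omega,
        Nat.choose_succ_succ]
      push_cast
      ring
    · simp
  -- The term `i = 0` of the second part vanishes, the others are those of `2 * evenU k p`.
  rw [h1, Finset.sum_range_succ']
  unfold evenU
  rw [Finset.mul_sum, add_comm]
  congr 1
  simp only [add_zero, Nat.sub_zero, Nat.choose_succ_self, Nat.cast_zero, zero_mul]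
  refine Finset.sum_congr rfl fun i _ => ?_
  rw [show p + 1 - (i + 1) = p - i by omega, show p + (i + 1) = p + 1 + i by omega]
  ring

lemma evenU_succ (k : ℝ) (p : ℕ) : evenU k (p + 1) = 2 * oddU k (p + 1) + k * evenU k p := by
  unfold oddU evenU
  rw [Finset.sum_range_succ, Finset.sum_range_succ _ (p + 1), mul_add, Finset.mul_sum,
    Finset.mul_sum, add_right_comm (Finset.sum _ _), ← Finset.sum_add_distrib]
  congr 1
  · refine Finset.sum_congr rfl fun i hi => ?_
    have hi' : i ≤ p := Nat.lt_succ_iff.mp (Finset.mem_range.mp hi)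
    rw [show p + 1 - i = p - i + 1 by omega, show p + 1 + 1 + i = p + 1 + i + 1 by omega,
      Nat.choose_succ_succ]
    push_cast
    ring
  · simp

/-- Decomposition of the sequence along the fundamental solution, with coefficients `k * G 1` and
`G 2`. Two consecutive indices are treated together, as the order-two recurrence requires. -/
lemma genPell_eq_U (k a p : ℕ) :
    genPell k a (2 * p + 3) = a * k * oddU k p + (a * k + 2 * a) * evenU k p ∧
    genPell k a (2 * p + 4) = a * k * evenU k p + (a * k + 2 * a) * oddU k (p + 1) := by
  induction p with
  | zero =>
    rw [oddU_succ]
    simp only [genPell, oddU, evenU]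
    constructor <;> norm_num <;> ring
  | succ p ih =>
    obtain ⟨h1, h2⟩ := ih
    have h3 : genPell k a (2 * p + 5) =
        2 * genPell k a (2 * p + 4) + k * genPell k a (2 * p + 3) := rfl
    have h4 : genPell k a (2 * p + 6) =
        2 * genPell k a (2 * p + 5) + k * genPell k a (2 * p + 4) := rfl
    have e := evenU_succ k p
    have o := oddU_succ k p
    have o' := oddU_succ k (p + 1)
    rw [show 2 * (p + 1) + 3 = 2 * p + 5 by ring, show 2 * (p + 1) + 4 = 2 * p + 6 by ring,
      h4, h3, h1, h2, o', e, o]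
    constructor <;> ring

lemma binom_natCast {t b : ℕ} (h : b ≤ t) : binom t b = t.choose b := by
  simp [binom, h]

/-- Closed form for G_{k,2m+1} (the even case n = 2m). -/
theorem genPell_closed_even (k a m : ℕ) (hk : 0 < k) (ha : 0 < a) (hm : 0 < m) :
    genPell k a (2 * m + 1) =
      ∑ i ∈ Finset.Icc 1 m, ∑ j ∈ Finset.range 2,
        (binom ((m : ℤ) - 2 + i + j) (m - i) : ℝ) * (a : ℝ) ^ (1 - j) *
          (k : ℝ) ^ (m + 1 - i - j) * (2 : ℝ) ^ (2 * i + j - 2) *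
          ((a : ℝ) * k + 2 * a) ^ j := by
  obtain ⟨p, rfl⟩ : ∃ p, m = p + 1 := ⟨m - 1, by omega⟩
  rw [show 2 * (p + 1) + 1 = 2 * p + 3 by ring, (genPell_eq_U k a p).1, oddU, evenU,
    Finset.mul_sum, Finset.mul_sum, ← Finset.sum_add_distrib, ← Finset.Ico_add_one_right_eq_Icc,
    Finset.sum_Ico_eq_sum_range]
  refine Finset.sum_congr rfl fun i hi => ?_
  have hi' : i ≤ p := Nat.lt_succ_iff.mp (Finset.mem_range.mp hi)
  have b0 : binom (((p + 1 : ℕ) : ℤ) - 2 + ((1 + i : ℕ) : ℤ) + ((0 : ℕ) : ℤ))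
      (p + 1 - (1 + i)) = (p + i).choose (p - i) := by
    rw [← binom_natCast (by omega)]
    congr 1
    · push_cast; ring
    · omega
  have b1 : binom (((p + 1 : ℕ) : ℤ) - 2 + ((1 + i : ℕ) : ℤ) + ((1 : ℕ) : ℤ))
      (p + 1 - (1 + i)) = (p + 1 + i).choose (p - i) := by
    rw [← binom_natCast (by omega)]
    congr 1
    · push_cast; ring
    · omega
  rw [Finset.sum_range_succ, Finset.sum_range_one, b0, b1,
    show p + 1 + 1 - (1 + i) - 0 = p - i + 1 by omega,
    show p + 1 + 1 - (1 + i) - 1 = p - i by omega,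
    show 2 * (1 + i) + 0 - 2 = 2 * i by omega,
    show 2 * (1 + i) + 1 - 2 = 2 * i + 1 by omega, pow_succ (2 : ℝ) (2 * i), pow_mul]
  norm_num
  ring
end

section
/- For all positive integers k, a, and m, the odd-index closed form holds: G_{k,2m} = Σ_{i=1}^{m} Σ_{j=0}^{1} C(m-3+i+j, m-i) · a^{1-j} · k^{m+1-i-j} · 2^{2i+j-3} · (ak+2a)^j, where C(t,b) denotes the binomial coefficient with the convention C(t,b) = 0 whenever t < b (in particular C(-1,0) = 0), the powers of 2 being interpreted in the reals (the single term with negative exponent of 2 has vanishing binomial coefficient). -/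
/-- The diagonal sum `∑ C(n-r, r) 2^(n-2r) k^r`, with `(n - r, r)` running over the antidiagonal.
The truncated exponents `p.1 - p.2` only matter where the binomial coefficient vanishes. -/
noncomputable def diagSum (k : ℝ) (n : ℕ) : ℝ :=
  ∑ p ∈ Finset.HasAntidiagonal.antidiagonal n, (p.1.choose p.2 : ℝ) * 2 ^ (p.1 - p.2) * k ^ p.2

theorem diagSum_rec (k : ℝ) (n : ℕ) :
    diagSum k (n + 2) = 2 * diagSum k (n + 1) + k * diagSum k n := by
  have key : ∀ p : ℕ × ℕ,
      ((p.1 + 1).choose (p.2 + 1) : ℝ) * 2 ^ (p.1 + 1 - (p.2 + 1)) * k ^ (p.2 + 1) =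
      2 * ((p.1.choose (p.2 + 1) : ℝ) * 2 ^ (p.1 - (p.2 + 1)) * k ^ (p.2 + 1)) +
      k * ((p.1.choose p.2 : ℝ) * 2 ^ (p.1 - p.2) * k ^ p.2) := by
    rintro ⟨i, j⟩
    simp only [Nat.choose_succ_succ' i j, Nat.add_sub_add_right, Nat.cast_add]
    rcases Nat.lt_or_ge i (j + 1) with h | h
    · simp only [Nat.choose_eq_zero_of_lt h, Nat.cast_zero]
      ring
    · have e : i - j = i - (j + 1) + 1 := by omega
      rw [e]
      ring
  unfold diagSum
  rw [Finset.Nat.antidiagonal_succ_succ', Finset.Nat.antidiagonal_succ']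
  simp only [Finset.sum_cons, Finset.sum_map, Function.Embedding.prodMap,
    Function.Embedding.coeFn_mk, Prod.map, Function.Embedding.refl_apply, Nat.succ_eq_add_one, key,
    Finset.sum_add_distrib, ← Finset.mul_sum]
  simp
  ring

theorem genPell_eq_diagSum (k a : ℕ) (n : ℕ) :
    genPell k a (n + 3) =
      ((a : ℝ) * k + 2 * a) * diagSum k (n + 1) + (a : ℝ) * k * diagSum k n := by
  induction n using Nat.twoStepInduction with
  | zero =>
    simp [genPell, diagSum, Finset.Nat.antidiagonal_succ]
    ring
  | one =>
    rw [diagSum_rec]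
    simp [genPell, diagSum, Finset.Nat.antidiagonal_succ]
    ring
  | more n h1 h2 =>
    have e : genPell k a (n + 2 + 3) =
        2 * genPell k a (n + 1 + 3) + k * genPell k a (n + 3) := rfl
    linear_combination e + 2 * h2 + k * h1 - ((a : ℝ) * k + 2 * a) * diagSum_rec k (n + 1)
      - (a : ℝ) * k * diagSum_rec k n

/-- The diagonal sum may be cut off at any `m > n / 2`, and then its terms can be written with the
integer-argument `binom` and integer powers of `2`. -/
theorem diagSum_eq_sum_binom (k : ℝ) (n m : ℕ) (h : n < 2 * m) (h' : m ≤ n + 1) :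
    diagSum k n = ∑ r ∈ Finset.range m,
      (binom ((n : ℤ) - r) r : ℝ) * (2 : ℝ) ^ ((n : ℤ) - 2 * r) * k ^ r := by
  unfold diagSum
  rw [← Finset.Nat.sum_antidiagonal_swap]
  simp only [Prod.fst_swap, Prod.snd_swap]
  rw [Finset.Nat.sum_antidiagonal_eq_sum_range_succ
    (fun r s => (s.choose r : ℝ) * 2 ^ (s - r) * k ^ r) n,
    ← Finset.sum_subset (Finset.range_subset_range.2 h')]
  · refine Finset.sum_congr rfl fun r hr => ?_
    rw [Finset.mem_range] at hr
    rcases Nat.lt_or_ge n (2 * r) with hn | hn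
    · rw [Nat.choose_eq_zero_of_lt (show n - r < r by omega), binom, if_pos (by omega)]
      simp
    · have e1 : ((n : ℤ) - r).toNat = n - r := by omega
      have e2 : (n : ℤ) - 2 * r = ((n - r - r : ℕ) : ℤ) := by omega
      rw [binom, if_neg (by omega), e1, e2, zpow_natCast]
      simp
  · intro r _ hr
    rw [Finset.mem_range, not_lt] at hr
    rw [Nat.choose_eq_zero_of_lt (show n - r < r by omega)]
    simp

/-- Closed form for G_{k,2m} (the odd case n = 2m-1); the powers of 2 are
    interpreted in the reals (integer exponents), since the single term with a
    negative exponent of 2 has vanishing binomial coefficient. -/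
theorem genPell_closed_odd (k a m : ℕ) (hk : 0 < k) (ha : 0 < a) (hm : 0 < m) :
    genPell k a (2 * m) =
      ∑ i ∈ Finset.Icc 1 m, ∑ j ∈ Finset.range 2,
        (binom ((m : ℤ) - 3 + i + j) (m - i) : ℝ) * (a : ℝ) ^ (1 - j) *
          (k : ℝ) ^ (m + 1 - i - j) * (2 : ℝ) ^ (2 * (i : ℤ) + j - 3) *
          ((a : ℝ) * k + 2 * a) ^ j := by
  obtain rfl | ⟨M, rfl⟩ : m = 1 ∨ ∃ M, m = M + 2 := by
    rcases m with _ | _ | M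
    · omega
    · simp
    · exact Or.inr ⟨M, rfl⟩
  · simp [genPell, binom, Finset.sum_range_succ]
    ring
  · have e : 2 * (M + 2) = 2 * M + 1 + 3 := by ring
    rw [e, genPell_eq_diagSum, diagSum_eq_sum_binom k (2 * M + 1 + 1) (M + 2) (by omega) (by omega),
      diagSum_eq_sum_binom k (2 * M + 1) (M + 2) (by omega) (by omega), Finset.mul_sum,
      Finset.mul_sum, ← Finset.sum_add_distrib]
    -- The two sums correspond under `i = M + 2 - r`.
    refine Finset.sum_bij' (fun r _ => M + 2 - r) (fun i _ => M + 2 - i) ?_ ?_ ?_ ?_ ?_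
    · intro r hr
      simp only [Finset.mem_range, Finset.mem_Icc] at *
      omega
    · intro i hi
      simp only [Finset.mem_range, Finset.mem_Icc] at *
      omega
    · intro r hr
      simp only [Finset.mem_range] at *
      omega
    · intro i hi
      simp only [Finset.mem_Icc] at *
      omega
    · intro r hr
      rw [Finset.mem_range] at hr
      have c : ((M + 2 - r : ℕ) : ℤ) = M + 2 - r := by omega
      have d0 : M + 2 - (M + 2 - r) = r := by omega
      have d1 : M + 2 + 1 - (M + 2 - r) - 0 = r + 1 := by omega
      have d2 : M + 2 + 1 - (M + 2 - r) - 1 = r := by omega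
      have b0 : ((M + 2 : ℕ) : ℤ) - 3 + (M + 2 - r) + (0 : ℕ) = ((2 * M + 1 : ℕ) : ℤ) - r := by
        push_cast; ring
      have b1 : ((M + 2 : ℕ) : ℤ) - 3 + (M + 2 - r) + (1 : ℕ) = ((2 * M + 1 + 1 : ℕ) : ℤ) - r := by
        push_cast; ring
      have p0 : 2 * ((M : ℤ) + 2 - r) + (0 : ℕ) - 3 = ((2 * M + 1 : ℕ) : ℤ) - 2 * r := by
        push_cast; ring
      have p1 : 2 * ((M : ℤ) + 2 - r) + (1 : ℕ) - 3 = ((2 * M + 1 + 1 : ℕ) : ℤ) - 2 * r := by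
        push_cast; ring
      rw [Finset.sum_range_succ, Finset.sum_range_one, c, d0, d1, d2, b0, b1, p0, p1]
      simp only [Nat.sub_zero, Nat.sub_self, pow_zero, pow_one, pow_succ (k : ℝ) r]
      ring
end

section
/- For every positive integer k and every integer n ≥ 2, the k-Pell sequence satisfies P_{k,n+1} = Σ_{i=0}^{⌊n/2⌋} C(n-i, i) · k^i · 2^{n-2i}. -/
/-- The exponent `a - b` is truncated only when `a < b`, and then `C(a, b) = 0`. -/
theorem kPell_succ_eq_sum_antidiagonal (k : ℕ) : ∀ n : ℕ,
    kPell k (n + 1) = ∑ p ∈ Finset.HasAntidiagonal.antidiagonal n,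
      (p.1.choose p.2 : ℝ) * (k : ℝ) ^ p.2 * (2 : ℝ) ^ (p.1 - p.2) := by
  refine Nat.twoStepInduction (by simp [kPell]) ?_ fun n h1 h2 => ?_
  · simp [kPell, Finset.Nat.antidiagonal_succ]
  · -- Pascal's rule for the terms of the (n + 2)-nd sum with both indices positive
    have key : ∀ p : ℕ × ℕ,
        ((p.1 + 1).choose (p.2 + 1) : ℝ) * (k : ℝ) ^ (p.2 + 1) * 2 ^ (p.1 + 1 - (p.2 + 1)) =
          k * ((p.1.choose p.2 : ℝ) * (k : ℝ) ^ p.2 * 2 ^ (p.1 - p.2)) +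
          2 * ((p.1.choose (p.2 + 1) : ℝ) * (k : ℝ) ^ (p.2 + 1) * 2 ^ (p.1 - (p.2 + 1))) := by
      rintro ⟨a, b⟩
      rw [Nat.choose_succ_succ, Nat.add_sub_add_right]
      rcases Nat.lt_or_ge a (b + 1) with h | h
      · simp only [Nat.choose_eq_zero_of_lt h]
        push_cast
        ring
      · obtain ⟨c, rfl⟩ := Nat.exists_eq_add_of_le h
        rw [show b + 1 + c - b = c + 1 by omega, Nat.add_sub_cancel_left]
        push_cast
        ring
    have hsum := Finset.sum_congr (rfl : Finset.HasAntidiagonal.antidiagonal n = _)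
      fun p _ => key p
    rw [Finset.sum_add_distrib, ← Finset.mul_sum, ← Finset.mul_sum] at hsum
    rw [kPell, h1, h2, Finset.Nat.antidiagonal_succ_succ', Finset.Nat.antidiagonal_succ']
    simp only [Finset.sum_cons, Finset.sum_map]
    -- the boundary term at `(0, n + 2)` vanishes; those at `(n + 2, 0)` and `(n + 1, 0)` are
    -- `2 ^ (n + 2)` and `2 ^ (n + 1)`
    simp at hsum ⊢
    rw [hsum]
    ring

/-- Closed form for the k-Pell numbers: P_{k,n+1} = Σ_{i=0}^{⌊n/2⌋} C(n-i,i) k^i 2^{n-2i}. -/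
theorem kPell_closed_form (k : ℕ) (hk : 0 < k) (n : ℕ) (hn : 2 ≤ n) :
    kPell k (n + 1) =
      ∑ i ∈ Finset.range (n / 2 + 1),
        ((n - i).choose i : ℝ) * (k : ℝ) ^ i * (2 : ℝ) ^ (n - 2 * i) := by
  rw [kPell_succ_eq_sum_antidiagonal, Finset.Nat.antidiagonal_eq_map', Finset.sum_map]
  symm
  have hsub : Finset.range (n / 2 + 1) ⊆ Finset.range (n + 1) :=
    Finset.range_subset_range.2 (by omega)
  refine (Finset.sum_congr rfl fun i hi => ?_).trans (Finset.sum_subset hsub fun i hi hi' => ?_)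
  · rw [Finset.mem_range] at hi
    change _ = ((n - i).choose i : ℝ) * (k : ℝ) ^ i * 2 ^ (n - i - i)
    rw [Nat.sub_sub, two_mul]
  · rw [Finset.mem_range] at hi hi'
    change ((n - i).choose i : ℝ) * (k : ℝ) ^ i * 2 ^ (n - i - i) = 0
    rw [Nat.choose_eq_zero_of_lt (by omega)]
    simp
end

section
/- For every positive integer k and every positive integer n, the k-Pell number P_{k,n+1}, viewed as a complex number, equals the product over r = 1, ..., n of the eigenvalues of the tridiagonal matrix P_n(k): P_{k,n+1} = Π_{r=1}^{n} ( 2 + 2·i·√k · cos(rπ/(n+1)) ), where i is the imaginary unit. -/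
open Polynomial in
theorem eval_U_eq_prod (n : ℕ) (z : ℂ) :
    (Chebyshev.U ℂ n).eval z =
      ∏ j ∈ Finset.range n, (2 * z - 2 * (Real.cos ((j + 1) * Real.pi / (n + 1)) : ℂ)) := by
  have hinj := (Finset.range n).nodup_map_iff_injOn.mp (Chebyshev.roots_U_real_nodup n)
  have hcard : Multiset.card (Chebyshev.U ℝ n).roots = (Chebyshev.U ℝ n).natDegree := by
    rw [Chebyshev.roots_U_real, Chebyshev.natDegree_U_natCast, Finset.card_val,
      Finset.card_image_of_injOn hinj, Finset.card_range]
  have hfac := C_leadingCoeff_mul_prod_multiset_X_sub_C hcard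
  rw [Chebyshev.roots_U_real, Chebyshev.leadingCoeff_U_natCast] at hfac
  change _ * ∏ a ∈ Finset.image _ _, (X - C a) = _ at hfac
  rw [Finset.prod_image hinj] at hfac
  rw [← Chebyshev.aeval_U (R := ℝ), ← hfac]
  simp only [map_mul, map_prod, map_sub, aeval_X, aeval_C, Complex.coe_algebraMap]
  simp_rw [← mul_sub, Finset.prod_mul_distrib, Finset.prod_const, Finset.card_range]
  simp

open Polynomial in
theorem kPell_eq_pow_mul_eval_U (k : ℕ) {c z : ℂ} (hc : c ^ 2 = -k) (hz : c * z = 1) (n : ℕ) :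
    (kPell k (n + 1) : ℂ) = c ^ n * (Chebyshev.U ℂ n).eval z := by
  induction n using Nat.twoStepInduction with
  | zero => simp [kPell]
  | one =>
    simp only [kPell, Nat.cast_one, Chebyshev.U_one, eval_mul, eval_ofNat, eval_X]
    push_cast
    linear_combination -2 * hz
  | more n ih₁ ih₂ =>
    have hP : kPell k (n + 2 + 1) = 2 * kPell k (n + 1 + 1) + k * kPell k (n + 1) := rfl
    rw [hP]
    push_cast at ih₁ ih₂ ⊢
    rw [ih₁, ih₂, Chebyshev.U_add_two]
    simp only [eval_sub, eval_mul, eval_ofNat, eval_X]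
    linear_combination c ^ n * eval z (Chebyshev.U ℂ n) * hc
      - 2 * c ^ (n + 1) * eval z (Chebyshev.U ℂ (n + 1)) * hz

/-- The k-Pell number P_{k,n+1}, viewed as a complex number, equals the product of
    the eigenvalues of the n×n tridiagonal generating matrix P_n(k). -/
theorem kPell_eq_prod_eigenvalues (k n : ℕ) (hk : 0 < k) (hn : 0 < n) :
    (kPell k (n + 1) : ℂ) =
      ∏ r ∈ Finset.Icc 1 n,
        (2 + 2 * Complex.I * (Real.sqrt k : ℂ) *
          (Real.cos (r * Real.pi / (n + 1)) : ℂ)) := by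
  have hs : (Real.sqrt k : ℂ) ^ 2 = k := by
    exact_mod_cast Real.sq_sqrt (Nat.cast_nonneg k)
  have hc : (-(Complex.I * (Real.sqrt k : ℂ))) ^ 2 = -(k : ℂ) := by
    rw [neg_sq, mul_pow, Complex.I_sq, hs, neg_one_mul]
  have hc0 : -(Complex.I * (Real.sqrt k : ℂ)) ≠ 0 := by
    intro h
    rw [h] at hc
    simp at hc
    omega
  have hz := mul_inv_cancel₀ hc0
  rw [kPell_eq_pow_mul_eval_U k hc hz, eval_U_eq_prod, ← Finset.card_range n,
    ← Finset.prod_const, Finset.card_range, ← Finset.prod_mul_distrib,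
    ← Finset.Ico_add_one_right_eq_Icc, Finset.prod_Ico_eq_prod_range, Nat.add_sub_cancel]
  refine Finset.prod_congr rfl fun j _ => ?_
  rw [Nat.cast_add, Nat.cast_one, add_comm (1 : ℝ) (j : ℝ)]
  linear_combination 2 * hz
end

section
/- For all positive integers k and n, the matrix P_n(k) (over the rationals or reals) is invertible, and its inverse has entries (indexing rows and columns from 1 to n): [(P_n(k))^{-1}]_{i,j} = (-1)^{i+j} · k^{j-i} · P_{k,i} · P_{k,n-j+1} / P_{k,n+1} when i ≤ j, and [(P_n(k))^{-1}]_{i,j} = P_{k,j} · P_{k,n-i+1} / P_{k,n+1} when i > j. -/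
/-- The n×n tridiagonal generating matrix P_n(k): diagonal entries 2,
    superdiagonal entries k, subdiagonal entries -1, all other entries 0. -/
def kPellMatrix (k n : ℕ) : Matrix (Fin n) (Fin n) ℝ :=
  Matrix.of fun i j =>
    if (i : ℕ) = (j : ℕ) then 2
    else if (j : ℕ) = (i : ℕ) + 1 then (k : ℝ)
    else if (i : ℕ) = (j : ℕ) + 1 then -1
    else 0

/-- The addition formula `P_{m+r+1} = P_{m+1} P_{r+1} + k P_m P_r`. -/
lemma kPell_add (k m r : ℕ) :
    kPell k (m + r + 1) = kPell k (m + 1) * kPell k (r + 1) + k * kPell k m * kPell k r := by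
  induction r generalizing m with
  | zero => simp [kPell]
  | succ r ih =>
    have h := ih (m + 1)
    rw [show m + 1 + r + 1 = m + (r + 1) + 1 by ring] at h
    rw [h]
    simp only [kPell]
    ring

lemma kPell_succ_pos (k m : ℕ) : 0 < kPell k (m + 1) := by
  have h : 0 ≤ kPell k m ∧ 0 < kPell k (m + 1) := by
    induction m with
    | zero => simp [kPell]
    | succ m ih =>
      obtain ⟨h0, h1⟩ := ih
      refine ⟨h1.le, ?_⟩
      simp only [kPell]
      positivity
  exact h.2

/-- A row of `P_n(k)` acts on a vector, extended by zero at positions `0` and `n + 1`, as the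
three-term difference operator. The vector is indexed from `1`, so the row `i : Fin n` is centred
at `i + 1`. -/
lemma kPellMatrix_row_sum (k n : ℕ) (f : ℕ → ℝ) (h0 : f 0 = 0) (hf : f (n + 1) = 0)
    (i : Fin n) :
    ∑ l : Fin n, kPellMatrix k n i l * f ((l : ℕ) + 1) =
      -f i + 2 * f ((i : ℕ) + 1) + k * f ((i : ℕ) + 2) := by
  obtain ⟨i, hi⟩ := i
  have key : ∀ l : ℕ,
      (if i = l then (2 : ℝ) else if l = i + 1 then (k : ℝ) else if i = l + 1 then -1 else 0)
          * f (l + 1) =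
        (if i = l then 2 * f (i + 1) else 0) + (if i + 1 = l then k * f (i + 2) else 0) +
          (if i = l + 1 then -f i else 0) := by
    intro l
    split_ifs <;> first | omega | (subst_vars; ring)
  have hlow : ∑ l ∈ Finset.range n, (if i = l + 1 then -f i else 0) = -f i := by
    rcases i with _ | i
    · simp [h0]
    · simp [show i < n by omega]
  have hup : (if i + 1 < n then k * f (i + 2) else 0) = k * f (i + 2) := by
    split_ifs with h
    · rfl
    · rw [show i + 2 = n + 1 by omega, hf, mul_zero]
  simp only [kPellMatrix, Matrix.of_apply]
  rw [Fin.sum_univ_eq_sum_range (fun l =>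
    (if i = l then (2 : ℝ) else if l = i + 1 then (k : ℝ) else if i = l + 1 then -1 else 0)
      * f (l + 1)) n]
  simp only [key, Finset.sum_add_distrib, hlow, Finset.sum_ite_eq, Finset.mem_range, hi, hup,
    if_true]
  ring

/-- The claimed entry of the inverse in row `i` and column `j`, both indexed from `1`, times
`P_{k,n+1}`. The index `n + 1 - i` (rather than `n - i + 1`) makes the entry vanish at
`i = n + 1` despite truncated subtraction. -/
def kPellInvNum (k n j i : ℕ) : ℝ :=
  if i ≤ j then (-1) ^ (i + j) * (k : ℝ) ^ (j - i) * kPell k i * kPell k (n + 1 - j)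
  else kPell k j * kPell k (n + 1 - i)

/-- For a fixed column, the three-term operator of `P_n(k)` gives `P_{k,n+1}` on the diagonal
and `0` off it. -/
lemma kPellInvNum_rec (k n i j : ℕ) (hi : i < n) (hj : j < n) :
    -kPellInvNum k n (j + 1) i + 2 * kPellInvNum k n (j + 1) (i + 1)
      + k * kPellInvNum k n (j + 1) (i + 2) = if i = j then kPell k (n + 1) else 0 := by
  have hsq (m : ℕ) : ((-1 : ℝ) ^ m) ^ 2 = 1 := by rw [← pow_mul, mul_comm, pow_mul]; simp
  unfold kPellInvNum
  rcases lt_trichotomy i j with h | rfl | h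
  · obtain ⟨d, rfl⟩ := Nat.exists_eq_add_of_lt h
    rw [if_pos (by omega), if_pos (by omega), if_pos (by omega), if_neg (by omega),
      show i + d + 1 + 1 - i = d + 2 by omega, show i + d + 1 + 1 - (i + 1) = d + 1 by omega,
      show i + d + 1 + 1 - (i + 2) = d by omega]
    simp only [kPell]
    ring
  · obtain ⟨r, rfl⟩ := Nat.exists_eq_add_of_lt hi
    rw [if_pos (by omega), if_pos (by omega), if_neg (by omega), if_pos rfl,
      show i + 1 - i = 1 by omega, show i + 1 - (i + 1) = 0 by omega,
      show i + r + 1 + 1 - (i + 1) = r + 1 by omega,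
      show i + r + 1 + 1 - (i + 2) = r by omega,
      show i + r + 1 + 1 = (i + 1) + r + 1 by omega, kPell_add,
      show i + (i + 1) = 2 * i + 1 by ring, show i + 1 + (i + 1) = 2 * (i + 1) by ring]
    simp only [kPell, pow_succ, pow_mul]
    norm_num
    ring
  · obtain ⟨r, rfl⟩ := Nat.exists_eq_add_of_lt hi
    rw [if_neg (show ¬ i + 1 ≤ j + 1 by omega), if_neg (show ¬ i + 2 ≤ j + 1 by omega),
      if_neg (show ¬ i = j by omega),
      show i + r + 1 + 1 - (i + 1) = r + 1 by omega,
      show i + r + 1 + 1 - (i + 2) = r by omega]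
    -- At `i = j + 1` the entry above is the diagonal one, where both branches agree.
    have hd : (if i ≤ j + 1 then (-1) ^ (i + (j + 1)) * (k : ℝ) ^ (j + 1 - i) * kPell k i *
        kPell k (i + r + 1 + 1 - (j + 1)) else kPell k (j + 1) * kPell k (i + r + 1 + 1 - i)) =
        kPell k (j + 1) * kPell k (r + 2) := by
      split_ifs with h'
      · obtain rfl : i = j + 1 := by omega
        rw [show j + 1 + r + 1 + 1 - (j + 1) = r + 2 by omega, ← two_mul, pow_mul]
        simp
      · rw [show i + r + 1 + 1 - i = r + 2 by omega]
    rw [hd]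
    simp only [kPell]
    ring

lemma kPellMatrix_mul_inv (k n : ℕ) :
    kPellMatrix k n * Matrix.of (fun i j : Fin n =>
      kPellInvNum k n ((j : ℕ) + 1) ((i : ℕ) + 1) / kPell k (n + 1)) = 1 := by
  have hP := (kPell_succ_pos k n).ne'
  ext i j
  have h := kPellMatrix_row_sum k n (kPellInvNum k n ((j : ℕ) + 1))
    (by simp [kPellInvNum, kPell])
    (by simp [kPellInvNum, kPell, show ¬ n ≤ (j : ℕ) by omega]) i
  rw [kPellInvNum_rec k n i j i.2 j.2] at h
  simp only [Matrix.mul_apply, Matrix.of_apply, ← mul_div_assoc, ← Finset.sum_div, h,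
    Matrix.one_apply, Fin.ext_iff]
  split_ifs <;> simp [hP]

/-- P_n(k) is invertible, and the entries of its inverse are given by Usmani's
    formula, expressed in terms of k-Pell numbers.  Here rows and columns are
    indexed 1,…,n, so the index pair (i,j) of the paper corresponds to the pair
    (i+1, j+1) of `Fin n` indices i, j. -/
theorem kPellMatrix_inv (k n : ℕ) (hk : 0 < k) (hn : 0 < n) :
    IsUnit (kPellMatrix k n) ∧
      (∀ i j : Fin n, (i : ℕ) + 1 ≤ (j : ℕ) + 1 →
        (kPellMatrix k n)⁻¹ i j =
          (-1 : ℝ) ^ (((i : ℕ) + 1) + ((j : ℕ) + 1)) *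
            (k : ℝ) ^ (((j : ℕ) + 1) - ((i : ℕ) + 1)) *
            kPell k ((i : ℕ) + 1) * kPell k (n - ((j : ℕ) + 1) + 1) / kPell k (n + 1)) ∧
      (∀ i j : Fin n, (j : ℕ) + 1 < (i : ℕ) + 1 →
        (kPellMatrix k n)⁻¹ i j =
          kPell k ((j : ℕ) + 1) * kPell k (n - ((i : ℕ) + 1) + 1) / kPell k (n + 1)) := by
  have hAB := kPellMatrix_mul_inv k n
  refine ⟨(Matrix.isUnit_iff_isUnit_det _).2 (Matrix.isUnit_det_of_right_inverse hAB), ?_, ?_⟩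
  · intro i j hij
    rw [Matrix.inv_eq_right_inv hAB, Matrix.of_apply, kPellInvNum, if_pos hij,
      show n + 1 - ((j : ℕ) + 1) = n - ((j : ℕ) + 1) + 1 by omega]
  · intro i j hij
    rw [Matrix.inv_eq_right_inv hAB, Matrix.of_apply, kPellInvNum, if_neg (by omega),
      show n + 1 - ((i : ℕ) + 1) = n - ((i : ℕ) + 1) + 1 by omega]
end

section
/- For all positive integers k and n, the determinant of the matrix of cofactors C_n(k) of P_n(k) equals P_{k,n+1}^{n-1}. -/
/-- Deleting the first row and column of `P_{n+1}(k)` leaves `P_n(k)`. -/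
theorem kPellMatrix_submatrix_succ (k n : ℕ) :
    (kPellMatrix k (n + 1)).submatrix Fin.succ Fin.succ = kPellMatrix k n := by
  ext i j
  simp [kPellMatrix]

/-- The minor of `P_{n+2}(k)` at position `(0, 1)`: its first column is `(-1, 0, …, 0)`, and
deleting the first row and column of it leaves `P_n(k)`. -/
theorem det_kPellMatrix_minor (k n : ℕ) :
    ((kPellMatrix k (n + 2)).submatrix Fin.succ (Fin.succAbove 1)).det =
      -(kPellMatrix k n).det := by
  rw [Matrix.det_succ_column_zero, Fin.sum_univ_succ, Finset.sum_eq_zero]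
  · have h : ((kPellMatrix k (n + 2)).submatrix Fin.succ (Fin.succAbove 1)).submatrix
        (Fin.succAbove 0) Fin.succ = kPellMatrix k n := by
      rw [← kPellMatrix_submatrix_succ k n, ← kPellMatrix_submatrix_succ k (n + 1)]
      ext i j
      have hj : Fin.succAbove (1 : Fin (n + 2)) j.succ = j.succ.succ := by
        rw [← Fin.succ_zero_eq_one, Fin.succ_succAbove_succ, Fin.succAbove_zero]
      simp [hj]
    rw [h]
    simp [kPellMatrix]
  · intro i _
    simp [kPellMatrix]

theorem det_kPellMatrix_add_two (k n : ℕ) :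
    (kPellMatrix k (n + 2)).det =
      2 * (kPellMatrix k (n + 1)).det + k * (kPellMatrix k n).det := by
  rw [Matrix.det_succ_row_zero, Fin.sum_univ_succ, Fin.sum_univ_succ, Finset.sum_eq_zero]
  · rw [Fin.succ_zero_eq_one, det_kPellMatrix_minor, Fin.succAbove_zero,
      kPellMatrix_submatrix_succ]
    simp [kPellMatrix]
  · intro i _
    simp [kPellMatrix]

theorem det_kPellMatrix (k : ℕ) : ∀ n : ℕ, (kPellMatrix k n).det = kPell k (n + 1)
  | 0 => by simp [kPell]
  | 1 => by simp [kPell, kPellMatrix]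
  | n + 2 => by
    rw [det_kPellMatrix_add_two, det_kPellMatrix k (n + 1), det_kPellMatrix k n]
    rfl

/-- The determinant of the matrix of cofactors of P_n(k) (the transpose of the
    adjugate of P_n(k)) equals P_{k,n+1}^{n-1}. -/
theorem det_cofactor_kPellMatrix (k n : ℕ) (hk : 0 < k) (hn : 0 < n) :
    ((kPellMatrix k n).adjugate.transpose).det = kPell k (n + 1) ^ (n - 1) := by
  rw [Matrix.det_transpose, Matrix.det_adjugate, det_kPellMatrix, Fintype.card_fin]
end

section
/- For all positive integers k and a, every natural number n, and every positive integer i with i ≤ n, the Generalized k-Pell and k-Pell sequences satisfy G_{k,n+1} = k · G_{k,i} · P_{k,n-i} + G_{k,i+1} · P_{k,n+1-i}. -/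
/-- The splitting identity with `n = i + m`, which avoids truncated subtraction. By induction on `m`
for all `i` at once: the split at `(i + 1, m)` becomes the one at `(i, m + 1)` on expanding
`G (i + 2)` and `P (m + 2)` by their common recurrence. -/
theorem genPell_add (k a m : ℕ) : ∀ i : ℕ,
    genPell k a (i + m + 1) =
      (k : ℝ) * genPell k a i * kPell k m + genPell k a (i + 1) * kPell k (m + 1) := by
  induction m with
  | zero => intro i; simp [kPell]
  | succ m ih =>
    intro i
    have h := ih (i + 1)
    rw [show i + 1 + m + 1 = i + (m + 1) + 1 by omega] at h
    rw [h, genPell, kPell]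
    ring

/-- G_{k,n+1} = k G_{k,i} P_{k,n-i} + G_{k,i+1} P_{k,n+1-i}. -/
theorem genPell_split (k a : ℕ) (hk : 0 < k) (ha : 0 < a) (n : ℕ) (i : ℕ)
    (hi : 0 < i) (hin : i ≤ n) :
    genPell k a (n + 1) =
      (k : ℝ) * genPell k a i * kPell k (n - i) + genPell k a (i + 1) * kPell k (n + 1 - i) := by
  obtain ⟨m, rfl⟩ := Nat.exists_eq_add_of_le hin
  rw [genPell_add, show i + m - i = m by omega, show i + m + 1 - i = m + 1 by omega]
end
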